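/- For the edge ideal I = I(G_{n,r}), if s and t are positive integers with I^{(s)} ⊄ I^t, then s/t < 2(n - (r+1))/n. Consequently the resurgence ρ(I) = sup{ s/t : I^{(s)} ⊄ I^t } satisfies ρ(I) ≤ 2(n-(r+1))/n. -/

import Mathlib

open MvPolynomial

/-- The graph `G_{n,r}`: vertices `x_1,…,x_n` in cyclic order (indexed by `ZMod n`),
where for `i < j` the vertices `x_i, x_j` are adjacent iff `r+1 ≤ j-i ≤ n-(r+1)`. -/
def Gnr (n r : ℕ) : SimpleGraph (ZMod n) :=
  SimpleGraph.fromRel (fun i j => r + 1 ≤ j.val - i.val ∧ j.val - i.val ≤ n - (r + 1))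

/-- A vertex cover (as a finite set of vertices): meets every edge. -/
def IsVertexCover {V : Type*} (G : SimpleGraph V) (C : Finset V) : Prop :=
  ∀ ⦃a b : V⦄, G.Adj a b → a ∈ C ∨ b ∈ C

/-- A minimal vertex cover. -/
def IsMinVertexCover {V : Type*} (G : SimpleGraph V) (C : Finset V) : Prop :=
  IsVertexCover G C ∧ ∀ D ⊆ C, IsVertexCover G D → D = C

/-- The edge ideal `I(G) = (x_i x_j : {x_i,x_j} ∈ E(G))` of a graph. -/
noncomputable def edgeIdeal (k : Type*) [Field k] {V : Type*} (G : SimpleGraph V) :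
    Ideal (MvPolynomial V k) :=
  Ideal.span {p | ∃ i j : V, G.Adj i j ∧ p = X i * X j}

/-- The monomial prime ideal generated by the variables of a vertex set `C`. -/
noncomputable def coverPrime (k : Type*) [Field k] {V : Type*} (C : Finset V) :
    Ideal (MvPolynomial V k) :=
  Ideal.span ((fun i => (X i : MvPolynomial V k)) '' ↑C)

/-- The `t`-th symbolic power of the edge ideal of `G`: the intersection of the `t`-th
powers of the monomial primes corresponding to the minimal vertex covers of `G`. -/
noncomputable def symbPow (k : Type*) [Field k] {V : Type*} (G : SimpleGraph V) (t : ℕ) :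
    Ideal (MvPolynomial V k) :=
  ⨅ (C : Finset V) (_ : IsMinVertexCover G C), (coverPrime k C) ^ t

/-! ## Matching theory -/

lemma odd_le_one_of_preconnected {W : Type*} [Finite W] (H : SimpleGraph W)
    (h : H.Preconnected) : H.oddComponents.ncard ≤ 1 := by
  rw [Set.ncard_le_one]
  intro a _ b _
  induction a using SimpleGraph.ConnectedComponent.ind with | _ a =>
  induction b using SimpleGraph.ConnectedComponent.ind with | _ b =>
  exact SimpleGraph.ConnectedComponent.eq.mpr (h a b)

lemma bip_cover {W : Type*} [Fintype W] (H : SimpleGraph W) (col : W → Prop)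
    (hcol : ∀ x y, H.Adj x y → ¬ (col x ↔ col y)) :
    ∃ D : Finset W, IsVertexCover H D ∧ 2 * D.card + H.oddComponents.ncard ≤ Fintype.card W := by
  classical
  let comp : W → H.ConnectedComponent := H.connectedComponentMk
  haveI : Fintype H.ConnectedComponent := Fintype.ofFinite _
  let F : H.ConnectedComponent → Prop → Finset W :=
    fun c q => Finset.univ.filter (fun x => comp x = c ∧ (col x ↔ q))
  have hF : ∀ c, (F c True).card + (F c False).card
      = (Finset.univ.filter (fun x => comp x = c)).card := by
    intro c
    rw [← Finset.card_filter_add_card_filter_not (s := Finset.univ.filter (fun x => comp x = c)) col]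
    simp only [F, Finset.filter_filter, iff_true, iff_false]
  have hg : ∀ c, ∃ q : Prop, 2 * (F c q).card + (if Odd c.supp.ncard then 1 else 0)
      ≤ (Finset.univ.filter (fun x => comp x = c)).card := by
    intro c
    have h1 := hF c
    have h2 : c.supp.ncard = (Finset.univ.filter (fun x => comp x = c)).card := by
      rw [← Set.ncard_coe_finset]
      congr 1
      ext x
      simp [comp]
    rw [h2]
    rcases le_total (F c True).card (F c False).card with h | h
    · refine ⟨True, ?_⟩
      split_ifs with ho
      · rcases ho with ⟨j, hj⟩; omega
      · omega
    · refine ⟨False, ?_⟩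
      split_ifs with ho
      · rcases ho with ⟨j, hj⟩; omega
      · omega
  choose g hg using hg
  refine ⟨Finset.univ.filter (fun x => col x ↔ g (comp x)), ?_, ?_⟩
  · intro a b hab
    have h1 := hcol a b hab
    have h2 : comp a = comp b := SimpleGraph.ConnectedComponent.eq.mpr hab.reachable
    simp only [Finset.mem_filter, Finset.mem_univ, true_and, h2]
    tauto
  · have e1 : (Finset.univ.filter (fun x => col x ↔ g (comp x))).card
        = ∑ c, (F c (g c)).card := by
      rw [Finset.card_eq_sum_card_fiberwise (f := comp) (t := Finset.univ) (by simp)]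
      refine Finset.sum_congr rfl fun c _ => ?_
      congr 1
      ext x
      simp only [F, Finset.mem_filter, Finset.mem_univ, true_and]
      constructor
      · rintro ⟨h, rfl⟩; exact ⟨rfl, h⟩
      · rintro ⟨rfl, h⟩; exact ⟨h, rfl⟩
    have e2 : Fintype.card W = ∑ c, (Finset.univ.filter (fun x => comp x = c)).card := by
      rw [← Finset.card_univ,
        Finset.card_eq_sum_card_fiberwise (f := comp) (t := Finset.univ) (by simp)]
    have e3 : H.oddComponents.ncard = ∑ c : H.ConnectedComponent,
        (if Odd c.supp.ncard then 1 else 0) := by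
      rw [← Finset.card_filter, ← Set.ncard_coe_finset]
      congr 1
      ext x
      simp
    rw [e1, e2, e3, Finset.mul_sum, ← Finset.sum_add_distrib]
    exact Finset.sum_le_sum fun c _ => hg c

/-- Join of a graph with a clique on `d` new vertices. -/
def joinClique {B : Type*} (K : SimpleGraph B) (d : ℕ) : SimpleGraph (B ⊕ Fin d) where
  Adj x y := x ≠ y ∧ ∀ a b, x = Sum.inl a → y = Sum.inl b → K.Adj a b
  symm := ⟨fun x y h => ⟨h.1.symm, fun a b ha hb => (h.2 b a hb ha).symm⟩⟩
  loopless := ⟨fun x h => h.1 rfl⟩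

lemma exists_pm {B : Type*} [Fintype B] (K : SimpleGraph B)
    (hK : ∀ v, ∃ col : B → Prop, ∀ x y, K.Adj x y → ¬ K.Adj x v → ¬ K.Adj y v →
      ¬ (col x ↔ col y))
    (t : ℕ) (ht : 2 * t ≤ Fintype.card B)
    (hc : ∀ D : Finset B, IsVertexCover K D → t ≤ D.card) :
    ∃ M : (joinClique K (Fintype.card B - 2 * t)).Subgraph, M.IsPerfectMatching := by
  classical
  set d := Fintype.card B - 2 * t with hd
  rw [SimpleGraph.tutte]
  intro u hu
  unfold SimpleGraph.IsTutteViolator at hu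
  set H := ((⊤ : (joinClique K d).Subgraph).deleteVerts u).coe with hH
  have hadj : ∀ x y, H.Adj x y ↔ (joinClique K d).Adj x.1 y.1 := by
    intro x y
    have hx := x.2
    have hy := y.2
    simp at hx hy
    simp [hH, hx, hy]
  by_cases hp : H.Preconnected
  · have h1 := odd_le_one_of_preconnected H hp
    have hu0 : u.ncard = 0 := by omega
    have hue : u = ∅ := by rwa [Set.ncard_eq_zero] at hu0
    have h3 : H.oddComponents.ncard = 1 := by omega
    have h4 := (SimpleGraph.odd_ncard_oddComponents H).mp (by rw [h3]; exact odd_one)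
    have h5 : Nat.card ((⊤ : (joinClique K d).Subgraph).deleteVerts u).verts
        = Fintype.card B + d := by
      rw [Nat.card_coe_set_eq]
      subst hue
      simp [Set.ncard_univ]
    rw [h5] at h4
    rcases h4 with ⟨j, hj⟩
    omega
  · -- all remaining vertices come from `B`
    have hinl : ∀ x : ((⊤ : (joinClique K d).Subgraph).deleteVerts u).verts,
        ∃ b : B, x.1 = Sum.inl b := by
      rintro ⟨x | e, hx⟩
      · exact ⟨x, rfl⟩
      · exfalso
        apply hp
        have key : ∀ y, H.Reachable ⟨Sum.inr e, hx⟩ y := by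
          intro y
          by_cases hy : (⟨Sum.inr e, hx⟩ : ((⊤ : (joinClique K d).Subgraph).deleteVerts u).verts) = y
          · rw [hy]
          · apply SimpleGraph.Adj.reachable
            rw [hadj]
            refine ⟨fun h => hy (Subtype.ext h), ?_⟩
            intro a b ha
            simp at ha
        intro a b
        exact (key a).symm.trans (key b)
    choose β hβ using hinl
    have hadj' : ∀ x y, H.Adj x y ↔ K.Adj (β x) (β y) := by
      intro x y
      rw [hadj]
      constructor
      · intro h; exact h.2 _ _ (hβ x) (hβ y)
      · intro h
        refine ⟨fun e => ?_, ?_⟩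
        · rw [hβ x, hβ y] at e
          exact h.ne (Sum.inl_injective e)
        · intro a b ha hb
          rw [hβ x] at ha
          rw [hβ y] at hb
          rw [← Sum.inl_injective ha, ← Sum.inl_injective hb]
          exact h
    have hout : ∀ c : H.ConnectedComponent, ∃ v, H.connectedComponentMk v ≠ c := by
      intro c
      by_contra hcon
      push Not at hcon
      exact hp fun a b => SimpleGraph.ConnectedComponent.eq.mp ((hcon a).trans (hcon b).symm)
    choose v hv using hout
    choose col hcol using hK
    obtain ⟨D, hD, hDc⟩ := bip_cover H
      (fun x => col (β (v (H.connectedComponentMk x))) (β x)) (by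
        intro x y hxy
        have e : H.connectedComponentMk x = H.connectedComponentMk y :=
          SimpleGraph.ConnectedComponent.eq.mpr hxy.reachable
        simp only [e]
        refine hcol _ _ _ ((hadj' _ _).mp hxy) ?_ ?_
        · rw [← hadj']
          intro h
          apply hv (H.connectedComponentMk y)
          rw [← e]
          rw [← e] at h
          exact SimpleGraph.ConnectedComponent.eq.mpr h.reachable.symm
        · rw [← hadj']
          intro h
          exact hv (H.connectedComponentMk y)
            (SimpleGraph.ConnectedComponent.eq.mpr h.reachable.symm))
    -- the cover of `K`
    let U' : Finset B := Finset.univ.filter (fun b => Sum.inl b ∈ u)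
    have hcov : IsVertexCover K (U' ∪ D.image β) := by
      intro a b hab
      by_cases ha : Sum.inl a ∈ u
      · left; simp [U', ha]
      by_cases hb : Sum.inl b ∈ u
      · right; simp [U', hb]
      let x : ((⊤ : (joinClique K d).Subgraph).deleteVerts u).verts := ⟨Sum.inl a, by simpa using ha⟩
      let y : ((⊤ : (joinClique K d).Subgraph).deleteVerts u).verts := ⟨Sum.inl b, by simpa using hb⟩
      have hx : β x = a := (Sum.inl_injective (hβ x)).symm
      have hy : β y = b := (Sum.inl_injective (hβ y)).symm
      have hxy : H.Adj x y := by rw [hadj', hx, hy]; exact hab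
      rcases hD hxy with h | h
      · left
        exact Finset.mem_union_right _ (Finset.mem_image.mpr ⟨x, h, hx⟩)
      · right
        exact Finset.mem_union_right _ (Finset.mem_image.mpr ⟨y, h, hy⟩)
    have h1 := hc _ hcov
    have h2 : (U' ∪ D.image β).card ≤ U'.card + D.card :=
      (Finset.card_union_le _ _).trans (Nat.add_le_add_left Finset.card_image_le _)
    have hinr : ∀ e : Fin d, Sum.inr e ∈ u := by
      intro e
      by_contra he
      have := hβ ⟨Sum.inr e, by simpa using he⟩
      simp at this
    have h3 : u.ncard = U'.card + d := by
      have : u = ((U'.disjSum Finset.univ : Finset (B ⊕ Fin d)) : Set (B ⊕ Fin d)) := by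
        ext z
        rcases z with z | z
        · simp [U']
        · simp [hinr]
      rw [this, Set.ncard_coe_finset, Finset.card_disjSum]
      simp
    have h4 : Fintype.card ((⊤ : (joinClique K d).Subgraph).deleteVerts u).verts + u.ncard
        = Fintype.card B + d := by
      rw [← Nat.card_eq_fintype_card, Nat.card_coe_set_eq]
      have := Set.ncard_add_ncard_compl u
      rw [Nat.card_eq_fintype_card, Fintype.card_sum, Fintype.card_fin] at this
      rw [← this, add_comm]
      congr 2
      ext z
      simp
    omega

/-! ## From perfect matchings to membership in powers of the edge ideal -/

@[to_additive]
lemma prod_invol {A N : Type*} [Fintype A] [CommMonoid N] (o : A → ℕ)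
    (ho : Function.Injective o) (f : A → A)
    (hff : ∀ a, f (f a) = a) (hne : ∀ a, f a ≠ a) (h : A → N) :
    ∏ a, h a = ∏ a ∈ Finset.univ.filter (fun a => o a < o (f a)), (h a * h (f a)) := by
  rw [← Finset.prod_filter_mul_prod_filter_not Finset.univ (fun a => o a < o (f a)),
    Finset.prod_mul_distrib]
  congr 1
  refine Finset.prod_nbij' f f ?_ ?_ ?_ ?_ ?_
  · intro a ha
    simp only [Finset.mem_filter, Finset.mem_univ, true_and, not_lt, hff] at ha ⊢
    exact lt_of_le_of_ne ha (ho.ne (hne a))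
  · intro a ha
    simp only [Finset.mem_filter, Finset.mem_univ, true_and, not_lt, hff] at ha ⊢
    exact ha.le
  · intro a _; exact hff a
  · intro a _; exact hff a
  · intro a _; rw [hff]

lemma prod_mem_pow {k V : Type*} [Field k] [Fintype V] (G : SimpleGraph V)
    (hG : ∀ v, ∃ col : V → Prop, ∀ x y, G.Adj x y → ¬ G.Adj x v → ¬ G.Adj y v →
      ¬ (col x ↔ col y))
    (m : V → ℕ) (t : ℕ) (ht : 2 * t ≤ ∑ i, m i)
    (hc : ∀ C : Finset V, IsVertexCover G C → t ≤ ∑ i ∈ C, m i) :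
    ∏ i, (X i : MvPolynomial V k) ^ m i ∈ (edgeIdeal k G) ^ t := by
  classical
  let B := Σ i, Fin (m i)
  let K : SimpleGraph B := G.comap Sigma.fst
  have hcard : Fintype.card B = ∑ i, m i := by simp [B]
  obtain ⟨M, hM⟩ := exists_pm K
    (by
      intro v
      obtain ⟨col, h⟩ := hG v.1
      exact ⟨fun x => col x.1, fun x y => h x.1 y.1⟩) t (by rw [hcard]; exact ht)
    (by
      intro D hD
      let C : Finset V := Finset.univ.filter (fun i => ∀ e : Fin (m i), (⟨i, e⟩ : B) ∈ D)
      have hC : IsVertexCover G C := by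
        intro a b hab
        by_contra hcon
        push Not at hcon
        simp only [C, Finset.mem_filter, Finset.mem_univ, true_and, not_forall] at hcon
        obtain ⟨⟨e, he⟩, ⟨e', he'⟩⟩ := hcon
        have : K.Adj ⟨a, e⟩ ⟨b, e'⟩ := hab
        rcases hD this with h | h
        · exact he h
        · exact he' h
      refine (hc C hC).trans ?_
      have : (C.sigma (fun i => (Finset.univ : Finset (Fin (m i))))).card = ∑ i ∈ C, m i := by
        simp
      rw [← this]
      apply Finset.card_le_card
      rintro ⟨i, e⟩ hi
      simp only [Finset.mem_sigma, C, Finset.mem_filter, Finset.mem_univ, true_and, and_true] at hi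
      exact hi e)
  set d := Fintype.card B - 2 * t with hd
  rw [SimpleGraph.Subgraph.isPerfectMatching_iff] at hM
  choose f hf hfu using hM
  have hff : ∀ a, f (f a) = a := fun a => (hfu (f a) a (hf a).symm).symm
  have hne : ∀ a, f a ≠ a := fun a h => by
    have := (hf a).ne
    rw [h] at this
    exact this rfl
  let o : B ⊕ Fin d → ℕ := fun a => (Fintype.equivFin (B ⊕ Fin d) a).val
  have ho : Function.Injective o :=
    Fin.val_injective.comp (Fintype.equivFin (B ⊕ Fin d)).injective
  let h : B ⊕ Fin d → MvPolynomial V k := Sum.elim (fun b => X b.1) (fun _ => 1)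
  let ex : B ⊕ Fin d → ℕ := Sum.elim (fun _ => 0) (fun _ => 1)
  let R : Finset (B ⊕ Fin d) := Finset.univ.filter (fun a => o a < o (f a))
  have e1 : ∏ a, h a = ∏ a ∈ R, (h a * h (f a)) := prod_invol o ho f hff hne h
  have e2 : ∑ a, ex a = ∑ a ∈ R, (ex a + ex (f a)) := sum_invol o ho f hff hne ex
  have e3 : ∑ a : B ⊕ Fin d, 1 = ∑ a ∈ R, (1 + 1) := sum_invol o ho f hff hne (fun _ => 1)
  have e1' : ∏ a, h a = ∏ i, (X i : MvPolynomial V k) ^ m i := by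
    simp only [h, Fintype.prod_sum_type, Sum.elim_inl, Sum.elim_inr, Finset.prod_const_one, mul_one]
    rw [Fintype.prod_sigma]
    simp
  have e2' : ∑ a, ex a = d := by
    simp [ex, Fintype.sum_sum_type]
  have e3' : Fintype.card B + d = R.card * 2 := by
    simpa using e3
  let P : B ⊕ Fin d → Prop := fun a => ex a + ex (f a) = 0
  have hbad : (R.filter (fun a => ¬ P a)).card ≤ d := by
    refine le_of_le_of_eq ?_ (e2.symm.trans e2')
    rw [Finset.card_filter]
    refine Finset.sum_le_sum fun a _ => ?_
    split_ifs with hh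
    · exact Nat.zero_le _
    · exact Nat.one_le_iff_ne_zero.mpr hh
  have hsplit := Finset.card_filter_add_card_filter_not (s := R) P
  have hgood : t ≤ (R.filter P).card := by omega
  rw [← e1', e1, ← Finset.prod_filter_mul_prod_filter_not R P]
  apply Ideal.mul_mem_right
  apply Ideal.pow_le_pow_right hgood
  rw [← Finset.prod_const]
  apply Ideal.prod_mem_prod
  intro a ha
  have hP : ex a + ex (f a) = 0 := (Finset.mem_filter.mp ha).2
  have hadj := (hf a).adj_sub
  rcases ha' : a with b | e
  · rcases hb' : f a with b' | e'
    · have := hadj.2 b b' ha' hb'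
      rw [← ha', hb']
      simp only [ha', h, Sum.elim_inl]
      exact Ideal.subset_span ⟨b.1, b'.1, this, rfl⟩
    · rw [hb'] at hP
      simp [ex] at hP
  · rw [ha'] at hP
    simp [ex] at hP

/-! ## The symbolic power side -/

lemma mem_coverPrime_pow {k V : Type*} [Field k] (C : Finset V) (s : ℕ)
    (p : MvPolynomial V k) (hp : p ∈ coverPrime k C ^ s) :
    ∀ m ∈ p.support, s ≤ ∑ i ∈ C, m i := by
  classical
  induction s generalizing p with
  | zero => intro m _; exact Nat.zero_le _
  | succ s ih =>
    rw [pow_succ] at hp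
    refine Submodule.mul_induction_on hp ?_ ?_
    · intro a ha b hb m hm
      obtain ⟨x, hx, y, hy, rfl⟩ := Finset.mem_add.mp (MvPolynomial.support_mul a b hm)
      have h1 := ih a ha x hx
      obtain ⟨i, hi, hi0⟩ := mem_ideal_span_X_image.mp hb y hy
      have h2 : y i ≤ ∑ j ∈ C, y j := Finset.single_le_sum (fun _ _ => Nat.zero_le _) hi
      simp only [Finsupp.add_apply, Finset.sum_add_distrib]
      omega
    · intro a b ha hb m hm
      rcases Finset.mem_union.mp (MvPolynomial.support_add hm) with h | h
      · exact ha m h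
      · exact hb m h

lemma exists_min_cover {V : Type*} (G : SimpleGraph V) (C : Finset V)
    (hC : IsVertexCover G C) : ∃ D ⊆ C, IsMinVertexCover G D := by
  induction C using Finset.strongInduction with
  | _ C ih =>
    by_cases h : IsMinVertexCover G C
    · exact ⟨C, subset_rfl, h⟩
    · have : ∃ D ⊆ C, IsVertexCover G D ∧ D ≠ C := by
        by_contra hcon
        push Not at hcon
        exact h ⟨hC, hcon⟩
      obtain ⟨D, hDC, hD, hne⟩ := this
      obtain ⟨E, hE, hE'⟩ := ih D (Finset.ssubset_iff_subset_ne.mpr ⟨hDC, hne⟩) hD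
      exact ⟨E, hE.trans hDC, hE'⟩

lemma symbPow_cover {k V : Type*} [Field k] (G : SimpleGraph V) (s : ℕ)
    (p : MvPolynomial V k) (hp : p ∈ symbPow k G s) (m : V →₀ ℕ) (hm : m ∈ p.support)
    (C : Finset V) (hC : IsVertexCover G C) : s ≤ ∑ i ∈ C, m i := by
  obtain ⟨D, hDC, hD⟩ := exists_min_cover G C hC
  simp only [symbPow, Ideal.mem_iInf] at hp
  exact (mem_coverPrime_pow D s p (hp D hD) m hm).trans
    (Finset.sum_le_sum_of_subset hDC)

/-! ## The graph `Gnr` -/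

lemma Gnr_adj {n r : ℕ} [NeZero n] (a b : ZMod n) :
    (Gnr n r).Adj a b ↔ r + 1 ≤ (a - b).val ∧ (a - b).val + (r + 1) ≤ n := by
  have ha := ZMod.val_lt a
  have hb := ZMod.val_lt b
  unfold Gnr
  rw [SimpleGraph.fromRel_adj]
  have hab : a ≠ b ↔ a.val ≠ b.val := (ZMod.val_injective n).ne_iff.symm
  rw [hab]
  rcases le_total b.val a.val with h | h
  · rw [ZMod.val_sub h]
    omega
  · rcases h.eq_or_lt with h | h
    · have : a = b := ZMod.val_injective n h
      subst this
      simp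
    · have : (a - b).val = n - (b.val - a.val) := by
        have hne : b - a ≠ 0 := by
          intro h0
          have := sub_eq_zero.mp h0
          subst this
          omega
        haveI : NeZero (b - a) := ⟨hne⟩
        rw [← neg_sub, ZMod.val_neg_of_ne_zero, ZMod.val_sub h.le]
      rw [this]
      omega

lemma Gnr_col {n r : ℕ} [NeZero n] (hr : 2 * r + 2 ≤ n) (v : ZMod n) :
    ∃ col : ZMod n → Prop, ∀ x y, (Gnr n r).Adj x y → ¬ (Gnr n r).Adj x v →
      ¬ (Gnr n r).Adj y v → ¬ (col x ↔ col y) := by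
  refine ⟨fun x => (x - v).val ≤ r, ?_⟩
  have main : ∀ x y : ZMod n, (y - v).val ≤ (x - v).val → (Gnr n r).Adj x y →
      ¬ (Gnr n r).Adj x v → ¬ (Gnr n r).Adj y v → ¬ ((x - v).val ≤ r ↔ (y - v).val ≤ r) := by
    intro x y hle hxy hx hy
    rw [Gnr_adj] at hxy hx hy
    have e : x - y = (x - v) - (y - v) := by ring
    rw [e, ZMod.val_sub hle] at hxy
    have h1 := ZMod.val_lt (x - v)
    have h2 := ZMod.val_lt (y - v)
    omega
  intro x y hxy hx hy
  rcases le_total (y - v).val (x - v).val with h | h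
  · exact main x y h hxy hx hy
  · intro hh
    exact main y x h hxy.symm hy hx hh.symm

lemma Gnr_arc_cover {n r : ℕ} [NeZero n] (v : ZMod n) :
    IsVertexCover (Gnr n r) (Finset.univ.filter (fun x : ZMod n => r + 1 ≤ (x - v).val)) := by
  have main : ∀ x y : ZMod n, (y - v).val ≤ (x - v).val → (Gnr n r).Adj x y →
      r + 1 ≤ (x - v).val := by
    intro x y hle hxy
    rw [Gnr_adj] at hxy
    have e : x - y = (x - v) - (y - v) := by ring
    rw [e, ZMod.val_sub hle] at hxy
    omega
  intro x y hxy
  simp only [Finset.mem_filter, Finset.mem_univ, true_and]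
  rcases le_total (y - v).val (x - v).val with h | h
  · exact Or.inl (main x y h hxy)
  · exact Or.inr (main y x h hxy.symm)

lemma arc_card {n r : ℕ} [NeZero n] (x : ZMod n) :
    (Finset.univ.filter (fun v : ZMod n => r + 1 ≤ (x - v).val)).card = n - (r + 1) := by
  have : (Finset.Ico (r + 1) n).card = n - (r + 1) := by simp
  rw [← this]
  refine Finset.card_nbij' (fun v => (x - v).val) (fun j => x - (j : ZMod n)) ?_ ?_ ?_ ?_
  · intro v hv
    simp at hv ⊢
    exact ⟨hv, ZMod.val_lt _⟩
  · intro j hj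
    simp at hj ⊢
    rw [Nat.mod_eq_of_lt hj.2]
    exact hj.1
  · intro v _
    simp
  · intro j hj
    simp at hj ⊢
    exact Nat.mod_eq_of_lt hj.2

lemma degree_bound {n r : ℕ} [NeZero n] (m : ZMod n → ℕ) (s : ℕ)
    (h : ∀ C : Finset (ZMod n), IsVertexCover (Gnr n r) C → s ≤ ∑ i ∈ C, m i) :
    n * s ≤ (n - (r + 1)) * ∑ i, m i := by
  calc n * s = ∑ _v : ZMod n, s := by simp [ZMod.card]
    _ ≤ ∑ v : ZMod n, ∑ x ∈ Finset.univ.filter (fun x : ZMod n => r + 1 ≤ (x - v).val), m x :=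
        Finset.sum_le_sum fun v _ => h _ (Gnr_arc_cover v)
    _ = ∑ x : ZMod n, ∑ v : ZMod n, if r + 1 ≤ (x - v).val then m x else 0 := by
        simp_rw [Finset.sum_filter]
        exact Finset.sum_comm
    _ = ∑ x : ZMod n, (n - (r + 1)) * m x := by
        refine Finset.sum_congr rfl fun x _ => ?_
        rw [← Finset.sum_filter, Finset.sum_const, arc_card, smul_eq_mul]
    _ = (n - (r + 1)) * ∑ i, m i := by rw [Finset.mul_sum]

lemma symbPow_le {k : Type*} [Field k] (n r : ℕ) [NeZero n] (hr : 2 * r + 2 ≤ n) (s t : ℕ)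
    (hst : 2 * (n - (r + 1)) * t ≤ n * s) :
    symbPow k (Gnr n r) s ≤ edgeIdeal k (Gnr n r) ^ t := by
  intro p hp
  rw [p.as_sum]
  refine Ideal.sum_mem _ fun m hm => ?_
  have hcov := symbPow_cover (Gnr n r) s p hp m hm
  have hdeg := degree_bound (r := r) m s hcov
  have hpos : 0 < n - (r + 1) := by omega
  have h2t : 2 * t ≤ ∑ i, m i := by
    refine Nat.le_of_mul_le_mul_left ?_ hpos
    calc (n - (r + 1)) * (2 * t) = 2 * (n - (r + 1)) * t := by ring
      _ ≤ _ := hst.trans hdeg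
  have hts : t ≤ s := by
    refine Nat.le_of_mul_le_mul_left ?_ (Nat.pos_of_neZero n)
    refine le_trans ?_ hst
    exact Nat.mul_le_mul_right _ (by omega)
  have key := prod_mem_pow (k := k) (Gnr n r) (Gnr_col hr) m t h2t
    (fun C hC => hts.trans (hcov C hC))
  rw [MvPolynomial.monomial_eq, Finsupp.prod_fintype _ _ (by simp)]
  exact Ideal.mul_mem_left _ _ key

/-- For `I = I(G_{n,r})`, if `I^{(s)} ⊄ I^t` (with `s,t ≥ 1`) then
`s/t < 2(n-(r+1))/n`; consequently the resurgence
`ρ(I) = sup{s/t : I^{(s)} ⊄ I^t}` satisfies `ρ(I) ≤ 2(n-(r+1))/n`. -/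
theorem stmt15 {k : Type*} [Field k] (n r : ℕ) (hn : 2 ≤ n) (hr : r ≤ n / 2 - 1) :
    (∀ s t : ℕ, 0 < s → 0 < t →
      ¬ (symbPow k (Gnr n r) s ≤ (edgeIdeal k (Gnr n r)) ^ t) →
      (s : ℝ) / t < 2 * ((n : ℝ) - (r + 1)) / n) ∧
    sSup {x : ℝ | ∃ s t : ℕ, 0 < s ∧ 0 < t ∧
        ¬ (symbPow k (Gnr n r) s ≤ (edgeIdeal k (Gnr n r)) ^ t) ∧ x = (s : ℝ) / t} ≤
      2 * ((n : ℝ) - (r + 1)) / n := by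
  haveI : NeZero n := ⟨by omega⟩
  have hr' : 2 * r + 2 ≤ n := by omega
  have hn0 : (0 : ℝ) < n := by
    have : 0 < n := by omega
    exact_mod_cast this
  have hr2 : (2 * r + 2 : ℝ) ≤ n := by exact_mod_cast hr'
  have main : ∀ s t : ℕ, 0 < s → 0 < t →
      ¬ (symbPow k (Gnr n r) s ≤ (edgeIdeal k (Gnr n r)) ^ t) →
      (s : ℝ) / t < 2 * ((n : ℝ) - (r + 1)) / n := by
    intro s t _ ht hnot
    by_contra hcon
    apply hnot
    apply symbPow_le n r hr'
    have ht0 : (0 : ℝ) < t := by exact_mod_cast ht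
    rw [not_lt, div_le_div_iff₀ hn0 ht0] at hcon
    have hsub : ((n - (r + 1) : ℕ) : ℝ) = (n : ℝ) - (r + 1) := by
      rw [Nat.cast_sub (by omega)]
      push_cast
      ring
    have : ((2 * (n - (r + 1)) * t : ℕ) : ℝ) ≤ ((n * s : ℕ) : ℝ) := by
      rw [Nat.cast_mul, Nat.cast_mul, hsub]
      push_cast
      linarith
    exact_mod_cast this
  refine ⟨main, ?_⟩
  apply Real.sSup_le
  · rintro x ⟨s, t, hs, ht, hnot, rfl⟩
    exact (main s t hs ht hnot).le
  · apply div_nonneg _ hn0.le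
    have : (0 : ℝ) ≤ r := Nat.cast_nonneg r
    linarith
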